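/- The equation 3n² + 6nd + 5d² = t² has no solutions in positive integers n, d, t. -/

import Mathlib

/-!
With `m = n + d` the equation becomes `3 m² + 2 d² = t²`. Since `2` is not a square modulo `3`,
both `d` and `t` are divisible by `3`; then `9 ∣ 3 m²`, so `3 ∣ m`, and dividing all three
by `3` gives a smaller solution. Infinite descent forces `d = 0`.
-/

lemma eq_zero_of_three_mul_sq_add_two_mul_sq (d : ℕ) :
    ∀ m t : ℕ, 3 * m ^ 2 + 2 * d ^ 2 = t ^ 2 → d = 0 := by
  induction d using Nat.strong_induction_on with
  | _ d ih =>
    intro m t h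
    have hmod : d % 3 = 0 ∧ t % 3 = 0 := by
      have hd : d % 3 < 3 := Nat.mod_lt _ (by norm_num)
      have ht : t % 3 < 3 := Nat.mod_lt _ (by norm_num)
      have hd2 := Nat.pow_mod d 2 3
      have ht2 := Nat.pow_mod t 2 3
      generalize d % 3 = a at *
      generalize t % 3 = b at *
      interval_cases a <;> interval_cases b <;> norm_num at hd2 ht2 ⊢ <;> omega
    obtain ⟨e, rfl⟩ := Nat.dvd_of_mod_eq_zero hmod.1
    obtain ⟨s, rfl⟩ := Nat.dvd_of_mod_eq_zero hmod.2
    have hm : 3 ∣ m := by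
      apply Nat.prime_three.dvd_of_dvd_pow (n := 2)
      have : m ^ 2 + 6 * e ^ 2 = 3 * s ^ 2 := by nlinarith
      omega
    obtain ⟨k, rfl⟩ := hm
    by_contra hne
    have he : e = 0 := ih e (by omega) k s (by nlinarith)
    omega

theorem no_pos_sol_3n2_6nd_5d2 :
    ¬ ∃ n d t : ℕ, 0 < n ∧ 0 < d ∧ 0 < t ∧
      3 * n ^ 2 + 6 * n * d + 5 * d ^ 2 = t ^ 2 := by
  rintro ⟨n, d, t, -, hd, -, h⟩
  have := eq_zero_of_three_mul_sq_add_two_mul_sq d (n + d) t (by rw [← h]; ring)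
  omega
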